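/- For each k ≥ 1 and |q| < 1: Σ_{λ: l(λ) ≤ k} q^{|λ| + Σ_i λ_i^2} / ((-q;q)_{λ_k} (q;q)_λ) = (q^{2k+2}, q^{2k+1}, q; q^{2k+2})_∞ / (q;q)_∞. -/

import Mathlib

/-- Finite q-Pochhammer symbol `(x;q)_n = ∏_{k=0}^{n-1} (1 - x q^k)`. -/
noncomputable def qPoch (x q : ℂ) (n : ℕ) : ℂ := ∏ k ∈ Finset.range n, (1 - x * q ^ k)

/-- Infinite q-Pochhammer symbol `(x;q)_∞ = ∏_{k≥0} (1 - x q^k)`. -/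
noncomputable def qPochInf (x q : ℂ) : ℂ := ∏' k : ℕ, (1 - x * q ^ k)

/-- Partitions with at most `k` (positive) parts: antitone sequences of naturals vanishing
from index `k` on; `l 0` is the largest part `λ_1`, and `l (k-1)` is `λ_k`. -/
def PartK (k : ℕ) : Type := {l : ℕ → ℕ // Antitone l ∧ ∀ i, k ≤ i → l i = 0}

/-- `|λ| = Σ_i λ_i`. -/
def wtK (k : ℕ) (l : PartK k) : ℕ := ∑ i ∈ Finset.range k, l.1 i

/-- `n_2(λ) = Σ_i λ_i^2`. -/
def n2K (k : ℕ) (l : PartK k) : ℕ := ∑ i ∈ Finset.range k, (l.1 i) ^ 2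

/-- `n(λ) = Σ_i binom(λ_i, 2)`. -/
def nK (k : ℕ) (l : PartK k) : ℕ := ∑ i ∈ Finset.range k, Nat.choose (l.1 i) 2

/-- `(x;q)_λ = ∏_{i=1}^{k} (x;q)_{λ_i - λ_{i+1}}` (with `λ_{k+1} = 0`). -/
noncomputable def pochK (x q : ℂ) (k : ℕ) (l : PartK k) : ℂ :=
  ∏ i ∈ Finset.range k, qPoch x q (l.1 i - l.1 (i + 1))

/-!
The unit Bailey pair relative to `a = q` is moved once along Bailey's lemma with `ρ₁ = -q` and
`ρ₂ → ∞`, giving a pair with `β_n = 1 / ((q; q)_n (-q; q)_n)`. Each further step with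
`ρ₁, ρ₂ → ∞` replaces `β_n` by `∑_{j ≤ n} q^{j + j²} β_j / (q; q)_{n - j}`; this is a summation over
the smallest part of a partition, so `k` steps, in the last of which `n → ∞`, turn the sum over
partitions into the sum of `q^{k (r + r²)} α_r`. That sum is a theta series, evaluated by Jacobi's
triple product with `x = q^{2k+1}`, `y = q` and base `x y = q^{2k+2}`. The triple product itself is
the limit of a finite form with Gaussian binomial coefficients, obtained from the two `q`-Pascal
rules.
-/

open Finset Filter Topology

theorem qPoch_zero (x q : ℂ) : qPoch x q 0 = 1 := prod_range_zero _

theorem qPoch_succ (x q : ℂ) (n : ℕ) : qPoch x q (n + 1) = qPoch x q n * (1 - x * q ^ n) :=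
  prod_range_succ _ n

theorem qPoch_add (x q : ℂ) (m n : ℕ) :
    qPoch x q (m + n) = qPoch x q m * qPoch (x * q ^ m) q n := by
  simp only [qPoch, prod_range_add, pow_add, mul_assoc]

theorem qPoch_succ_left (x q : ℂ) (n : ℕ) :
    qPoch x q (n + 1) = (1 - x) * qPoch (x * q) q n := by
  rw [add_comm, qPoch_add, qPoch_succ, qPoch_zero, pow_zero, pow_one, mul_one, one_mul]

theorem qPoch_self_succ (q : ℂ) (n : ℕ) :
    qPoch q q (n + 1) = qPoch q q n * (1 - q ^ (n + 1)) := by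
  rw [qPoch_succ, pow_succ']

/-- The Gaussian binomial coefficient `[n, k]_q`, defined by the `q`-Pascal rule, so that it is
polynomial in `q` and makes sense at roots of unity. -/
def qBinom {R : Type*} [CommSemiring R] (q : R) : ℕ → ℕ → R
  | _, 0 => 1
  | 0, _ + 1 => 0
  | n + 1, k + 1 => qBinom q n (k + 1) + q ^ (n - k) * qBinom q n k

section qBinom

variable {R : Type*} [CommSemiring R] (q : R)

theorem qBinom_zero_right (n : ℕ) : qBinom q n 0 = 1 := by
  cases n <;> rfl

theorem qBinom_succ_succ (n k : ℕ) :
    qBinom q (n + 1) (k + 1) = qBinom q n (k + 1) + q ^ (n - k) * qBinom q n k := rfl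

theorem qBinom_eq_zero_of_lt {n k : ℕ} (h : n < k) : qBinom q n k = 0 := by
  induction n generalizing k with
  | zero => obtain ⟨k, rfl⟩ := Nat.exists_eq_succ_of_ne_zero h.ne'; rfl
  | succ n ih =>
    obtain ⟨k, rfl⟩ := Nat.exists_eq_succ_of_ne_zero (Nat.ne_zero_of_lt h)
    rw [qBinom_succ_succ, ih (by lia), ih (by lia), mul_zero, add_zero]

theorem qBinom_succ_succ' (n k : ℕ) :
    qBinom q (n + 1) (k + 1) = qBinom q n k + q ^ (k + 1) * qBinom q n (k + 1) := by
  induction n generalizing k with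
  | zero => cases k <;> simp [qBinom]
  | succ n ih =>
    rcases lt_or_ge n k with h | h
    · rw [qBinom_succ_succ, qBinom_eq_zero_of_lt q (show n + 1 < k + 1 by lia), mul_zero,
        Nat.sub_eq_zero_of_le h, pow_zero, one_mul, zero_add, add_zero]
    calc qBinom q (n + 1 + 1) (k + 1)
        = qBinom q (n + 1) (k + 1) + q ^ (n + 1 - k) * qBinom q (n + 1) k :=
          qBinom_succ_succ q (n + 1) k
      _ = qBinom q n k + q ^ (k + 1) * qBinom q n (k + 1) +
            q ^ (n + 1 - k) * qBinom q (n + 1) k := by rw [ih]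
      _ = qBinom q (n + 1) k + q ^ (k + 1) * (qBinom q n (k + 1) + q ^ (n - k) * qBinom q n k) := by
        cases k with
        | zero =>
          simp only [qBinom_zero_right, Nat.sub_zero]
          ring
        | succ k =>
          obtain ⟨d, rfl⟩ := Nat.exists_eq_add_of_le h
          conv_rhs => rw [qBinom_succ_succ q (k + 1 + d) k]
          rw [ih k, show k + 1 + d + 1 - (k + 1) = d + 1 by lia, Nat.add_sub_cancel_left,
            show k + 1 + d - k = d + 1 by lia]
          ring
      _ = qBinom q (n + 1) k + q ^ (k + 1) * qBinom q (n + 1) (k + 1) := by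
        rw [← qBinom_succ_succ]

theorem sum_qBinom_mul_eq_add (n : ℕ) (f : ℕ → R) :
    ∑ k ∈ range (n + 1), qBinom q n k * f k =
      ∑ k ∈ range (n + 1), qBinom q n (k + 1) * f (k + 1) + f 0 := by
  have h := sum_range_succ' (fun k => qBinom q n k * f k) (n + 1)
  rwa [sum_range_succ, qBinom_eq_zero_of_lt q n.lt_succ_self, zero_mul, add_zero,
    qBinom_zero_right, one_mul] at h

theorem sum_qBinom_succ_mul (n : ℕ) (f : ℕ → R) :
    ∑ k ∈ range (n + 2), qBinom q (n + 1) k * f k =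
      ∑ k ∈ range (n + 1), qBinom q n k * (f k + q ^ (n - k) * f (k + 1)) := by
  simp only [mul_add, sum_add_distrib]
  rw [sum_range_succ', qBinom_zero_right, one_mul, sum_qBinom_mul_eq_add, add_right_comm,
    ← sum_add_distrib]
  refine congrArg (· + f 0) (sum_congr rfl fun k _ => ?_)
  rw [qBinom_succ_succ]
  ring

theorem sum_qBinom_succ_mul' (n : ℕ) (f : ℕ → R) :
    ∑ k ∈ range (n + 2), qBinom q (n + 1) k * f k =
      ∑ k ∈ range (n + 1), qBinom q n k * (q ^ k * f k + f (k + 1)) := by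
  simp only [mul_add, sum_add_distrib]
  rw [sum_range_succ', qBinom_zero_right, one_mul, sum_qBinom_mul_eq_add q n fun k => q ^ k * f k,
    pow_zero, one_mul, add_right_comm, ← sum_add_distrib]
  refine congrArg (· + f 0) (sum_congr rfl fun k _ => ?_)
  rw [qBinom_succ_succ']
  ring

end qBinom

theorem qBinom_mul_qPoch (q : ℂ) (m n : ℕ) :
    qBinom q (m + n) m * (qPoch q q m * qPoch q q n) = qPoch q q (m + n) := by
  induction m generalizing n with
  | zero => simp [qBinom_zero_right, qPoch_zero]
  | succ m ihm =>
    induction n with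
    | zero =>
      rw [add_zero, qBinom_succ_succ, qBinom_eq_zero_of_lt q m.lt_succ_self, zero_add,
        qPoch_self_succ, Nat.sub_self, pow_zero, one_mul]
      linear_combination (1 - q ^ (m + 1)) * ihm 0
    | succ n ihn =>
      rw [show m + 1 + (n + 1) = m + 1 + n + 1 by ring, qBinom_succ_succ,
        show m + 1 + n - m = n + 1 by lia, qPoch_self_succ q (m + 1 + n)]
      have h := ihm (n + 1)
      rw [show m + (n + 1) = m + 1 + n by ring] at h
      rw [qPoch_self_succ] at h ⊢
      rw [qPoch_self_succ] at ihn ⊢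
      linear_combination (1 - q ^ (n + 1)) * ihn + q ^ (n + 1) * (1 - q ^ (m + 1)) * h

theorem qBinom_eq_div {q : ℂ} (hq : ∀ n, qPoch q q n ≠ 0) (m n : ℕ) :
    qBinom q (m + n) m = qPoch q q (m + n) / (qPoch q q m * qPoch q q n) :=
  eq_div_of_mul_eq (mul_ne_zero (hq m) (hq n)) (qBinom_mul_qPoch q m n)

/-- The product `(ρ; q)_n (-σ)^n q^{n(n-1)/2}` with `ρ = a q / σ`, which is the factor entering
Bailey's lemma. It is written as a polynomial in `σ` so that `ρ = ∞` becomes `σ = 0`. -/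
def baileyWeight (a σ q : ℂ) (n : ℕ) : ℂ := ∏ i ∈ range n, q ^ i * (a * q ^ (i + 1) - σ)

theorem baileyWeight_zero (a σ q : ℂ) : baileyWeight a σ q 0 = 1 := prod_range_zero _

theorem baileyWeight_add (a σ q : ℂ) (m n : ℕ) :
    baileyWeight a σ q (m + n) =
      baileyWeight a σ q m * baileyWeight (a * q ^ (2 * m)) (σ * q ^ m) q n := by
  rw [baileyWeight, prod_range_add]
  refine congrArg _ (prod_congr rfl fun i _ => ?_)
  ring

theorem baileyWeight_succ_left (a σ q : ℂ) (n : ℕ) :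
    baileyWeight a σ q (n + 1) = (a * q - σ) * q ^ n * baileyWeight (a * q) σ q n := by
  rw [baileyWeight, prod_range_succ', pow_zero, one_mul, zero_add, pow_one, mul_comm, mul_assoc]
  nth_rw 2 [← card_range n]
  rw [← prod_const, baileyWeight, ← prod_mul_distrib]
  refine congrArg _ (prod_congr rfl fun i _ => ?_)
  ring

theorem baileyWeight_zero_right (a q : ℂ) (n : ℕ) :
    baileyWeight a 0 q n = a ^ n * q ^ n ^ 2 := by
  induction n with
  | zero => simp [baileyWeight_zero]
  | succ n ih =>
    rw [baileyWeight, prod_range_succ, ← baileyWeight, ih]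
    ring

/-- The `q`-Chu–Vandermonde sum, cleared of denominators. -/
theorem sum_qBinom_mul_baileyWeight_mul_qPoch (b t q : ℂ) (n : ℕ) :
    ∑ k ∈ range (n + 1),
      qBinom q n k * (baileyWeight b t q k * qPoch (b * q ^ (k + 1)) q (n - k)) =
      qPoch t q n := by
  induction n generalizing b with
  | zero => simp [qBinom_zero_right, qPoch_zero, baileyWeight_zero]
  | succ n ih =>
    rw [sum_qBinom_succ_mul]
    have split : ∀ k ∈ range (n + 1),
        qBinom q n k * (baileyWeight b t q k * qPoch (b * q ^ (k + 1)) q (n + 1 - k) +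
          q ^ (n - k) *
            (baileyWeight b t q (k + 1) * qPoch (b * q ^ (k + 1 + 1)) q (n + 1 - (k + 1)))) =
        (1 - b * q ^ (n + 1)) *
          (qBinom q n k * (baileyWeight b t q k * qPoch (b * q ^ (k + 1)) q (n - k))) +
        (b * q - t) * q ^ n *
          (qBinom q n k * (baileyWeight (b * q) t q k *
            qPoch (b * q * q ^ (k + 1)) q (n - k))) := by
      intro k hk
      obtain ⟨d, rfl⟩ := Nat.exists_eq_add_of_le (Nat.lt_succ_iff.mp (mem_range.mp hk))
      rw [baileyWeight_succ_left, Nat.add_sub_add_right, Nat.add_sub_cancel_left,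
        show k + d + 1 - k = d + 1 by lia, qPoch_succ,
        show b * q ^ (k + 1 + 1) = b * q * q ^ (k + 1) by ring]
      ring
    rw [sum_congr rfl split, sum_add_distrib, ← mul_sum, ← mul_sum, ih, ih, qPoch_succ]
    ring

/-- The `j`-th term `(-1)^j x^{j(j+1)/2} y^{j(j-1)/2}` of the theta series in Jacobi's triple
product identity with base `x * y`. In this symmetric form no negative powers occur. -/
def jacobiTerm (x y : ℂ) : ℤ → ℂ
  | Int.ofNat n => (-1) ^ n * x ^ (n + 1).choose 2 * y ^ n.choose 2
  | Int.negSucc n => (-1) ^ (n + 1) * x ^ (n + 1).choose 2 * y ^ (n + 2).choose 2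

theorem jacobiTerm_natCast (x y : ℂ) (n : ℕ) :
    jacobiTerm x y n = (-1) ^ n * x ^ (n + 1).choose 2 * y ^ n.choose 2 := rfl

theorem jacobiTerm_neg (x y : ℂ) (j : ℤ) : jacobiTerm x y (-j) = jacobiTerm y x j := by
  rcases j with (_ | n) | n
  · rfl
  · exact mul_right_comm _ _ _
  · exact mul_right_comm _ _ _

theorem choose_two_succ (n : ℕ) : (n + 1).choose 2 = n + n.choose 2 := by
  rw [Nat.choose_succ_succ', Nat.choose_one_right]

theorem choose_two_succ_add_choose_two (n : ℕ) : (n + 1).choose 2 + n.choose 2 = n ^ 2 := by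
  induction n with
  | zero => rfl
  | succ n ih =>
    rw [choose_two_succ] at ih ⊢
    rw [choose_two_succ]
    linear_combination ih

theorem jacobiTerm_natCast_succ (x y : ℂ) (n : ℕ) :
    jacobiTerm x y (n + 1) = -(x * (x * y) ^ n) * jacobiTerm x y n := by
  rw [← Nat.cast_add_one, jacobiTerm_natCast, jacobiTerm_natCast, choose_two_succ (n + 1),
    choose_two_succ n]
  ring

theorem pow_mul_jacobiTerm_succ (x y : ℂ) {j : ℤ} {e f : ℕ} (h : (f : ℤ) = e + j) :
    (x * y) ^ e * jacobiTerm x y (j + 1) = -(x * (x * y) ^ f) * jacobiTerm x y j := by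
  rcases j with n | n
  · obtain rfl : f = e + n := Int.ofNat.inj h
    rw [Int.ofNat_eq_natCast, jacobiTerm_natCast_succ]
    ring
  · obtain rfl : e = f + n + 1 := by lia
    have hn : Int.negSucc n = -((n : ℤ) + 1) := Int.negSucc_eq n
    rw [hn, neg_add_rev, neg_add_cancel_comm, jacobiTerm_neg, ← neg_add_rev, jacobiTerm_neg,
      jacobiTerm_natCast_succ]
    ring

theorem pow_mul_jacobiTerm_pred (x y : ℂ) {j : ℤ} {e f : ℕ} (h : (f : ℤ) = e - j) :
    (x * y) ^ e * jacobiTerm x y (j - 1) = -(y * (x * y) ^ f) * jacobiTerm x y j := by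
  rw [← neg_neg j, ← neg_add', jacobiTerm_neg, jacobiTerm_neg, mul_comm x y]
  exact pow_mul_jacobiTerm_succ y x (by lia)

theorem sum_qBinom_mul_jacobiTerm (x y : ℂ) (m n : ℕ) :
    ∑ k ∈ range (m + n + 1), qBinom (x * y) (m + n) k * jacobiTerm x y (k - n) =
      qPoch x (x * y) m * qPoch y (x * y) n := by
  induction n with
  | zero =>
    induction m with
    | zero => simp [qBinom, qPoch_zero, jacobiTerm]
    | succ m ih =>
      rw [qPoch_succ, mul_right_comm, ← ih, sum_mul, show m + 1 + 0 = m + 0 + 1 by ring,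
        sum_qBinom_succ_mul]
      refine sum_congr rfl fun k hk => ?_
      have hkm : k ≤ m := Nat.lt_succ_iff.mp (mem_range.mp hk)
      have h := pow_mul_jacobiTerm_succ x y (j := k) (e := m - k) (f := m) (by lia)
      simp only [Nat.cast_zero, sub_zero, add_zero, Nat.cast_succ, h]
      ring
  | succ n ih =>
    rw [qPoch_succ, ← mul_assoc, ← ih, sum_mul, ← add_assoc, sum_qBinom_succ_mul']
    refine sum_congr rfl fun k _ => ?_
    have h := pow_mul_jacobiTerm_pred x y (j := k - n) (e := k) (f := n) (by lia)
    rw [Nat.cast_succ, Nat.cast_succ, add_sub_add_right_eq_sub, ← sub_sub, h]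
    ring

theorem tendsto_sum_mul_of_norm_le {ι R : Type*} [NormedRing R] [CompleteSpace R]
    {s : ℕ → Finset ι} (hs : Tendsto s atTop atTop) {a : ι → R} (ha : Summable fun i => ‖a i‖)
    {f : ℕ → ι → R} {C : ℝ} (hf : ∀ n i, ‖f n i‖ ≤ C) {L : R}
    (hL : ∀ i, Tendsto (fun n => f n i) atTop (𝓝 L)) :
    Tendsto (fun n => ∑ i ∈ s n, a i * f n i) atTop (𝓝 ((∑' i, a i) * L)) := by
  rw [← ha.of_norm.tsum_mul_right]
  refine (tendsto_tsum_of_dominated_convergence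
    (f := fun n => (s n : Set ι).indicator fun i => a i * f n i) (ha.mul_right C)
    (fun i => ?_) (Eventually.of_forall fun n i => ?_)).congr fun n => ?_
  · refine ((hL i).const_mul (a i)).congr' ?_
    filter_upwards [tendsto_atTop.mp hs {i}] with n hn
    exact (Set.indicator_of_mem (mem_coe.mpr (singleton_subset_iff.mp hn))
      fun i => a i * f n i).symm
  · exact (norm_indicator_le_norm_self _ _).trans
      ((norm_mul_le _ _).trans (mul_le_mul_of_nonneg_left (hf n i) (norm_nonneg _)))
  · exact (sum_eq_tsum_indicator _ _).symm

section convergence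

variable {x q : ℂ}

theorem summable_mul_pow (x : ℂ) (hq : ‖q‖ < 1) : Summable fun k : ℕ => ‖-(x * q ^ k)‖ := by
  simpa only [norm_neg] using ((summable_geometric_of_norm_lt_one hq).mul_left x).norm

theorem tendsto_qPoch (x : ℂ) (hq : ‖q‖ < 1) :
    Tendsto (qPoch x q) atTop (𝓝 (qPochInf x q)) := by
  have h := (multipliable_one_add_of_summable (summable_mul_pow x hq)).hasProd.tendsto_prod_nat
  simp only [← sub_eq_add_neg] at h
  exact h

theorem one_sub_mul_pow_ne_zero (hx : ‖x‖ < 1) (hq : ‖q‖ < 1) (k : ℕ) : 1 - x * q ^ k ≠ 0 := by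
  refine sub_ne_zero.mpr fun h => ?_
  have : ‖x * q ^ k‖ < 1 := by
    rw [norm_mul, norm_pow]
    exact mul_lt_one_of_nonneg_of_lt_one_left (norm_nonneg x) hx (pow_le_one₀ (norm_nonneg q) hq.le)
  simp [← h] at this

theorem qPoch_ne_zero (hx : ‖x‖ < 1) (hq : ‖q‖ < 1) (n : ℕ) : qPoch x q n ≠ 0 :=
  prod_ne_zero_iff.mpr fun k _ => one_sub_mul_pow_ne_zero hx hq k

theorem qPochInf_ne_zero (hx : ‖x‖ < 1) (hq : ‖q‖ < 1) : qPochInf x q ≠ 0 := by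
  have h := tprod_one_add_ne_zero_of_summable (f := fun k => -(x * q ^ k))
    (fun k => by simpa only [← sub_eq_add_neg] using one_sub_mul_pow_ne_zero hx hq k)
    (summable_mul_pow x hq)
  simp only [← sub_eq_add_neg] at h
  exact h

theorem qPochInf_eq_one_sub_mul (x : ℂ) (hq : ‖q‖ < 1) :
    qPochInf x q = (1 - x) * qPochInf (x * q) q :=
  tendsto_nhds_unique ((tendsto_qPoch x hq).comp (tendsto_add_atTop_nat 1)) <|
    ((tendsto_qPoch (x * q) hq).const_mul (1 - x)).congr fun n => (qPoch_succ_left x q n).symm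

theorem tendsto_inv_qPoch (hx : ‖x‖ < 1) (hq : ‖q‖ < 1) :
    Tendsto (fun n => (qPoch x q n)⁻¹) atTop (𝓝 (qPochInf x q)⁻¹) :=
  (tendsto_qPoch x hq).inv₀ (qPochInf_ne_zero hx hq)

theorem exists_norm_inv_qPoch_le (hx : ‖x‖ < 1) (hq : ‖q‖ < 1) :
    ∃ C, ∀ n, ‖(qPoch x q n)⁻¹‖ ≤ C := by
  obtain ⟨C, hC⟩ := (tendsto_inv_qPoch hx hq).norm.bddAbove_range
  exact ⟨C, fun n => hC ⟨n, rfl⟩⟩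

end convergence

theorem summable_of_succ_eq_mul_pow {𝕜 : Type*} [NormedField 𝕜] [CompleteSpace 𝕜]
    {f : ℕ → 𝕜} {x p : 𝕜} (hp : ‖p‖ < 1)
    (hf : ∀ n, f (n + 1) = x * p ^ n * f n) : Summable f := by
  have ratio : Tendsto (fun n : ℕ => ‖x * p ^ n‖) atTop (𝓝 0) := by
    simpa using ((tendsto_pow_atTop_nhds_zero_of_norm_lt_one hp).const_mul x).norm
  refine summable_of_ratio_norm_eventually_le (r := 1 / 2) (by norm_num) ?_
  filter_upwards [ratio.eventually_le_const (by norm_num : (0 : ℝ) < 1 / 2)] with n hn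
  rw [hf, norm_mul]
  gcongr

theorem summable_pow_mul_pow_sq (a : ℂ) {q : ℂ} (hq : ‖q‖ < 1) :
    Summable fun n => a ^ n * q ^ n ^ 2 := by
  have hq2 : ‖q ^ 2‖ < 1 := by
    rw [norm_pow]
    exact pow_lt_one₀ (norm_nonneg q) hq two_ne_zero
  exact summable_of_succ_eq_mul_pow (x := a * q) hq2 fun n => by ring

theorem summable_jacobiTerm_natCast {x y : ℂ} (h : ‖x * y‖ < 1) :
    Summable fun n : ℕ => jacobiTerm x y n :=
  summable_of_succ_eq_mul_pow (x := -x) h fun n => by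
    rw [Nat.cast_add_one, jacobiTerm_natCast_succ, neg_mul x]

theorem summable_jacobiTerm {x y : ℂ} (h : ‖x * y‖ < 1) : Summable (jacobiTerm x y) := by
  refine Summable.of_nat_of_neg (summable_jacobiTerm_natCast h) ?_
  simp only [jacobiTerm_neg]
  exact summable_jacobiTerm_natCast (mul_comm x y ▸ h)

theorem sum_Icc_jacobiTerm {x y : ℂ} (h : ‖x * y‖ < 1) (n : ℕ) :
    ∑ j ∈ Icc (-n : ℤ) n, jacobiTerm x y j *
        ((qPoch (x * y) (x * y) (n + j).toNat)⁻¹ * (qPoch (x * y) (x * y) (n - j).toNat)⁻¹) =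
      qPoch x (x * y) n * qPoch y (x * y) n * (qPoch (x * y) (x * y) (n + n))⁻¹ := by
  rw [← sum_qBinom_mul_jacobiTerm, sum_mul]
  refine (sum_nbij' (fun k : ℕ => (k : ℤ) - n) (fun j => (n + j).toNat) ?_ ?_ ?_ ?_ ?_).symm
  · simp only [mem_range, mem_Icc]
    lia
  · simp only [mem_range, mem_Icc]
    lia
  · lia
  · simp only [mem_Icc]
    lia
  · intro k hk
    obtain ⟨d, hd⟩ := Nat.exists_eq_add_of_le (Nat.lt_succ_iff.mp (mem_range.mp hk))
    rw [show ((n : ℤ) + (k - n)).toNat = k by lia, show ((n : ℤ) - (k - n)).toNat = d by lia,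
      hd, qBinom_eq_div (qPoch_ne_zero h h)]
    have := qPoch_ne_zero h h (k + d)
    field_simp

theorem tsum_jacobiTerm {x y : ℂ} (h : ‖x * y‖ < 1) :
    ∑' j, jacobiTerm x y j =
      qPochInf (x * y) (x * y) * qPochInf x (x * y) * qPochInf y (x * y) := by
  obtain ⟨C, hC⟩ := exists_norm_inv_qPoch_le h h
  have toNat_atTop (j : ℤ) : Tendsto (fun n : ℕ => (n + j).toNat) atTop atTop :=
    tendsto_atTop.mpr fun b => eventually_atTop.mpr ⟨b + j.natAbs, fun n _ => by lia⟩
  have inv_tendsto := tendsto_inv_qPoch h h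
  have sum_tendsto := tendsto_sum_mul_of_norm_le Finset.tendsto_Icc_neg (summable_jacobiTerm h).norm
    (f := fun n j =>
      (qPoch (x * y) (x * y) (n + j).toNat)⁻¹ * (qPoch (x * y) (x * y) (n - j).toNat)⁻¹)
    (fun n j => norm_mul_le_of_le (hC _) (hC _))
    (fun j => (inv_tendsto.comp (toNat_atTop j)).mul (inv_tendsto.comp (toNat_atTop (-j))))
  simp only [sum_Icc_jacobiTerm h] at sum_tendsto
  have prod_tendsto := ((tendsto_qPoch x h).mul (tendsto_qPoch y h)).mul
    (inv_tendsto.comp (tendsto_atTop_mono (fun n => n.le_add_right n) tendsto_id))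
  have limits_eq := tendsto_nhds_unique sum_tendsto prod_tendsto
  have := qPochInf_ne_zero h h
  field_simp at limits_eq
  linear_combination limits_eq

theorem jacobiTerm_neg_add_one (x y : ℂ) (n : ℕ) :
    jacobiTerm x y (-(n + 1)) = -(jacobiTerm x y n * y ^ (2 * n + 1)) := by
  rw [jacobiTerm_neg, ← Nat.cast_add_one, jacobiTerm_natCast, jacobiTerm_natCast,
    choose_two_succ (n + 1), choose_two_succ n]
  ring

theorem hasSum_jacobiTerm_natCast_mul {x y : ℂ} (h : ‖x * y‖ < 1) :
    HasSum (fun n : ℕ => jacobiTerm x y n * (1 - y ^ (2 * n + 1)))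
      (qPochInf (x * y) (x * y) * qPochInf x (x * y) * qPochInf y (x * y)) := by
  have folded := (summable_jacobiTerm h).hasSum.nat_add_neg_add_one
  simpa only [tsum_jacobiTerm h, jacobiTerm_neg_add_one, ← sub_eq_add_neg, ← mul_one_sub]
    using folded

/-- `(α, β)` is a Bailey pair relative to `a`. If some `(q; q)_n` or `(a q; q)_n` vanishes then the
corresponding summands are junk, so results about Bailey pairs assume that none of them does. -/
def IsBaileyPair (a q : ℂ) (α β : ℕ → ℂ) : Prop :=
  ∀ n, β n = ∑ r ∈ range (n + 1), α r / (qPoch q q (n - r) * qPoch (a * q) q (n + r))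

theorem sum_baileyWeight_div {a q : ℂ} (hq : ∀ n, qPoch q q n ≠ 0)
    (ha : ∀ n, qPoch (a * q) q n ≠ 0) (σ : ℂ) (r n : ℕ) :
    ∑ m ∈ range (n + 1), baileyWeight a σ q (r + m) /
        (qPoch q q m * qPoch (a * q) q (r + m + r) * qPoch q q (n - m)) =
      baileyWeight a σ q r * qPoch (σ * q ^ r) q n /
        (qPoch q q n * qPoch (a * q) q (r + n + r)) := by
  rw [← sum_qBinom_mul_baileyWeight_mul_qPoch (a * q ^ (2 * r)), mul_sum, sum_div]
  refine sum_congr rfl fun m hm => ?_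
  obtain ⟨d, rfl⟩ := Nat.exists_eq_add_of_le (Nat.lt_succ_iff.mp (mem_range.mp hm))
  have hsplit : qPoch (a * q) q (r + (m + d) + r) =
      qPoch (a * q) q (r + m + r) * qPoch (a * q ^ (2 * r) * q ^ (m + 1)) q d := by
    rw [show r + (m + d) + r = r + m + r + d by ring, qPoch_add]
    ring_nf
  have hr := ha (r + (m + d) + r)
  rw [hsplit] at hr ⊢
  rw [baileyWeight_add, qBinom_eq_div hq, Nat.add_sub_cancel_left]
  have := hq m
  have := hq d
  have := hq (m + d)
  have := left_ne_zero_of_mul hr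
  have := right_ne_zero_of_mul hr
  field_simp

/-- Bailey's lemma with one of its two parameters sent to infinity. -/
theorem IsBaileyPair.bailey_lemma {a q σ : ℂ} {α β : ℕ → ℂ} (h : IsBaileyPair a q α β)
    (hq : ∀ n, qPoch q q n ≠ 0) (ha : ∀ n, qPoch (a * q) q n ≠ 0) (hσ : ∀ n, qPoch σ q n ≠ 0) :
    IsBaileyPair a q (fun r => baileyWeight a σ q r / qPoch σ q r * α r)
      (fun n => (∑ j ∈ range (n + 1), baileyWeight a σ q j * β j / qPoch q q (n - j)) /
        qPoch σ q n) := by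
  intro n
  simp only [h _, mul_sum, sum_div, range_eq_Ico]
  rw [← sum_Ico_Ico_comm]
  refine sum_congr rfl fun r hr => ?_
  obtain ⟨m, rfl⟩ := Nat.exists_eq_add_of_le (Nat.lt_succ_iff.mp (mem_Ico.mp hr).2)
  have inner := sum_baileyWeight_div hq ha σ r m
  rw [sum_Ico_eq_sum_range, show r + m + 1 - r = m + 1 by lia, Nat.add_sub_cancel_left]
  calc _ = α r / qPoch σ q (r + m) * ∑ i ∈ range (m + 1), baileyWeight a σ q (r + i) /
        (qPoch q q i * qPoch (a * q) q (r + i + r) * qPoch q q (m - i)) := by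
        rw [mul_sum]
        refine sum_congr rfl fun i _ => ?_
        rw [Nat.add_sub_cancel_left, Nat.add_sub_add_left]
        ring
    _ = _ := by
        have hσm := hσ (r + m)
        rw [qPoch_add] at hσm ⊢
        have := left_ne_zero_of_mul hσm
        have := right_ne_zero_of_mul hσm
        rw [inner]
        field_simp

/-- The sequence obtained from `β` by weighting with `w` and then convolving with `c`. With
`w n = a ^ n * q ^ n ^ 2` and `c n = 1 / (q; q)_n` this is how `β` moves along the Bailey chain. -/
def baileyStep {R : Type*} [CommSemiring R] (w c β : ℕ → R) (n : ℕ) : R :=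
  ∑ j ∈ range (n + 1), w j * β j * c (n - j)

theorem IsBaileyPair.step {a q : ℂ} {α β : ℕ → ℂ} (h : IsBaileyPair a q α β)
    (hq : ∀ n, qPoch q q n ≠ 0) (ha : ∀ n, qPoch (a * q) q n ≠ 0) :
    IsBaileyPair a q (fun r => a ^ r * q ^ r ^ 2 * α r)
      (baileyStep (fun n => a ^ n * q ^ n ^ 2) (fun n => (qPoch q q n)⁻¹) β) := by
  have qPoch_zero_left (n : ℕ) : qPoch 0 q n = 1 := by simp [qPoch]
  have h0 := h.bailey_lemma (σ := 0) hq ha fun n => (qPoch_zero_left n).symm ▸ one_ne_zero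
  simp only [baileyWeight_zero_right, qPoch_zero_left, div_one] at h0
  simp only [div_eq_mul_inv] at h0
  exact h0

theorem IsBaileyPair.iterate_step {a q : ℂ} {α β : ℕ → ℂ} (h : IsBaileyPair a q α β)
    (hq : ∀ n, qPoch q q n ≠ 0) (ha : ∀ n, qPoch (a * q) q n ≠ 0) (k : ℕ) :
    IsBaileyPair a q (fun r => (a ^ r * q ^ r ^ 2) ^ k * α r)
      ((baileyStep (fun n => a ^ n * q ^ n ^ 2) (fun n => (qPoch q q n)⁻¹))^[k] β) := by
  induction k with
  | zero => simpa only [pow_zero, one_mul, Function.iterate_zero_apply] using h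
  | succ k ih =>
    simpa only [Function.iterate_succ_apply', pow_succ', mul_assoc] using ih.step hq ha

/-- The sum over all `r ≤ n` vanishes because its partial sums have this closed form. -/
theorem one_sub_pow_mul_sum_unitBaileyPair {a q : ℂ} (hq : ∀ n, qPoch q q n ≠ 0)
    (ha : ∀ n, qPoch a q n ≠ 0) {m n : ℕ} (hmn : m ≤ n) :
    (1 - q ^ n) * ∑ r ∈ range (m + 1), (-1) ^ r * q ^ r.choose 2 * qPoch a q r *
        (1 - a * q ^ (2 * r)) / (qPoch q q r * qPoch q q (n - r) * qPoch a q (n + r + 1)) =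
      (-1) ^ m * q ^ (m + 1).choose 2 * qPoch a q (m + 1) * (1 - q ^ (n - m)) /
        (qPoch q q m * qPoch q q (n - m) * qPoch a q (n + m + 1)) := by
  induction m with
  | zero =>
    simp only [zero_add, sum_range_one, qPoch_zero, qPoch_succ, Nat.choose_succ_self, mul_zero,
      Nat.choose_zero_succ, pow_zero, Nat.sub_zero, add_zero, mul_one, one_mul]
    ring
  | succ m ih =>
    obtain ⟨d, rfl⟩ := Nat.exists_eq_add_of_le' hmn
    rw [sum_range_succ, mul_add, ih (by lia), show d + (m + 1) - m = d + 1 by lia,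
      Nat.add_sub_cancel, choose_two_succ (m + 1),
      show d + (m + 1) + (m + 1) + 1 = d + (m + 1) + m + 1 + 1 by ring]
    have h0 := hq (d + 1)
    have h1 := hq (m + 1)
    have h2 := ha (d + (m + 1) + m + 1 + 1)
    rw [qPoch_self_succ] at h0 h1
    rw [qPoch_succ] at h2
    rw [qPoch_self_succ q d, qPoch_self_succ q m, qPoch_succ a q (d + (m + 1) + m + 1),
      qPoch_succ a q (m + 1)]
    have := left_ne_zero_of_mul h0
    have := right_ne_zero_of_mul h0
    have := left_ne_zero_of_mul h1
    have := right_ne_zero_of_mul h1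
    have := left_ne_zero_of_mul h2
    have := right_ne_zero_of_mul h2
    field_simp
    ring

theorem isBaileyPair_unit {a q : ℂ} (hq : ∀ n, qPoch q q n ≠ 0) (ha : ∀ n, qPoch a q n ≠ 0) :
    IsBaileyPair a q
      (fun r => (-1) ^ r * q ^ r.choose 2 * qPoch a q r * (1 - a * q ^ (2 * r)) /
        ((1 - a) * qPoch q q r))
      (fun n => if n = 0 then 1 else 0) := by
  intro n
  have ha1 : 1 - a ≠ 0 := by simpa [qPoch] using ha 1
  rcases n with _ | n
  · simp [qPoch_zero, ha1]
  have hqn : 1 - q ^ (n + 1) ≠ 0 := right_ne_zero_of_mul (qPoch_self_succ q n ▸ hq (n + 1))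
  have telescoped := one_sub_pow_mul_sum_unitBaileyPair hq ha le_rfl (n := n + 1)
  rw [Nat.sub_self, pow_zero, sub_self, mul_zero, zero_div] at telescoped
  refine (if_neg n.succ_ne_zero).trans ?_
  rw [← (mul_eq_zero.mp telescoped).resolve_left hqn]
  refine sum_congr rfl fun r _ => ?_
  rw [qPoch_succ_left]
  field_simp

theorem isBaileyPair_inv_qPoch_mul_qPoch_neg {q : ℂ} (hq : ∀ n, qPoch q q n ≠ 0)
    (hq' : ∀ n, qPoch (-q) q n ≠ 0) :
    IsBaileyPair q q (fun r => (-1) ^ r * q ^ r ^ 2 * (1 - q ^ (2 * r + 1)) / (1 - q))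
      (fun n => 1 / (qPoch q q n * qPoch (-q) q n)) := by
  have hqq (n : ℕ) : qPoch (q * q) q n ≠ 0 :=
    right_ne_zero_of_mul (qPoch_succ_left q q n ▸ hq (n + 1))
  have weight_eq (r : ℕ) : baileyWeight q (-q) q r = q ^ (r + 1).choose 2 * qPoch (-q) q r := by
    induction r with
    | zero => simp [baileyWeight_zero, qPoch_zero]
    | succ r ih =>
      rw [baileyWeight, prod_range_succ, ← baileyWeight, ih, qPoch_succ, choose_two_succ (r + 1)]
      ring
  convert (isBaileyPair_unit hq hq).bailey_lemma hq hqq hq' using 2 with r n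
  · rw [weight_eq, ← choose_two_succ_add_choose_two]
    have := hq r
    have := hq' r
    field_simp
    ring
  · simp [baileyWeight_zero, div_eq_mul_inv, mul_comm]

theorem IsBaileyPair.tsum_eq {a q : ℂ} {α β : ℕ → ℂ} (h : IsBaileyPair a q α β)
    (hq : ‖q‖ < 1) (ha : ‖a * q‖ < 1) (hα : Summable fun r => a ^ r * q ^ r ^ 2 * α r)
    (hβ : Summable fun n => a ^ n * q ^ n ^ 2 * β n) :
    ∑' n, a ^ n * q ^ n ^ 2 * β n = (∑' r, a ^ r * q ^ r ^ 2 * α r) / qPochInf (a * q) q := by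
  obtain ⟨C, hC⟩ := exists_norm_inv_qPoch_le hq hq
  obtain ⟨D, hD⟩ := exists_norm_inv_qPoch_le ha hq
  have range_atTop : Tendsto (fun n => range (n + 1)) atTop atTop :=
    tendsto_finset_range.comp (tendsto_add_atTop_nat 1)
  have inv_sub_tendsto (r : ℕ) :
      Tendsto (fun n => (qPoch q q (n - r))⁻¹) atTop (𝓝 (qPochInf q q)⁻¹) :=
    (tendsto_inv_qPoch hq hq).comp (tendsto_sub_atTop_nat r)
  have inv_add_tendsto (r : ℕ) :
      Tendsto (fun n => (qPoch (a * q) q (n + r))⁻¹) atTop (𝓝 (qPochInf (a * q) q)⁻¹) :=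
    (tendsto_inv_qPoch ha hq).comp (tendsto_add_atTop_nat r)
  have β_side := tendsto_sum_mul_of_norm_le range_atTop hβ.norm
    (f := fun n j => (qPoch q q (n - j))⁻¹) (fun n j => hC _) inv_sub_tendsto
  have α_side := tendsto_sum_mul_of_norm_le range_atTop hα.norm
    (f := fun n r => (qPoch q q (n - r))⁻¹ * (qPoch (a * q) q (n + r))⁻¹)
    (fun n r => norm_mul_le_of_le (hC _) (hD _))
    (fun r => (inv_sub_tendsto r).mul (inv_add_tendsto r))
  have sides_eq (n : ℕ) := h.step (qPoch_ne_zero hq hq) (qPoch_ne_zero ha hq) n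
  simp only [baileyStep, div_eq_mul_inv, mul_inv] at sides_eq
  simp only [sides_eq] at β_side
  have limits_eq := tendsto_nhds_unique β_side α_side
  have := qPochInf_ne_zero hq hq
  have := qPochInf_ne_zero ha hq
  field_simp at limits_eq ⊢
  exact limits_eq

theorem antitone_update {ι α : Type*} [PartialOrder ι] [DecidableEq ι] [Preorder α] {f : ι → α}
    (hf : Antitone f) {k : ι} {a : α} (hlt : ∀ i < k, a ≤ f i) (hgt : ∀ i, k < i → f i ≤ a) :
    Antitone (Function.update f k a) := by
  intro i j hij
  simp only [Function.update_apply]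
  split_ifs with hj hi hi
  · exact le_rfl
  · exact hlt i (lt_of_le_of_ne (hj ▸ hij) hi)
  · exact hgt j (lt_of_le_of_ne (hi ▸ hij) (Ne.symm hj))
  · exact hf hij

namespace PartK

variable {k : ℕ}

/-- The partition with its last part `λ_{k+1}` deleted. -/
def dropLast (l : PartK (k + 1)) : PartK k :=
  ⟨Function.update l.1 k 0,
    antitone_update l.2.1 (fun _ _ => Nat.zero_le _) fun i hi => (l.2.2 i hi).le,
    fun i hi => by
      rcases hi.eq_or_lt with rfl | hi
      · exact Function.update_self _ _ _
      · exact (Function.update_of_ne hi.ne' _ _).trans (l.2.2 i hi)⟩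

/-- The partition with `m` appended as a last part; there are at least two parts, so that `m` has a
predecessor `l.1 k` bounding it. -/
def snoc (l : PartK (k + 1)) (m : ℕ) (hm : m ≤ l.1 k) : PartK (k + 2) :=
  ⟨Function.update l.1 (k + 1) m,
    antitone_update l.2.1 (fun _ hi => hm.trans (l.2.1 (Nat.lt_succ_iff.mp hi)))
      fun i hi => (l.2.2 i hi.le).trans_le m.zero_le,
    fun i hi => (Function.update_of_ne (by lia) _ _).trans (l.2.2 i (by lia))⟩

theorem dropLast_apply_of_lt (l : PartK (k + 1)) {i : ℕ} (hi : i < k) : l.dropLast.1 i = l.1 i :=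
  Function.update_of_ne hi.ne _ _

theorem dropLast_snoc (l : PartK (k + 1)) {m : ℕ} (hm : m ≤ l.1 k) :
    (l.snoc m hm).dropLast = l :=
  Subtype.ext ((Function.update_idem _ _ _).trans
    (Function.update_eq_self_iff.mpr (l.2.2 (k + 1) le_rfl).symm))

theorem snoc_apply_last (l : PartK (k + 1)) {m : ℕ} (hm : m ≤ l.1 k) :
    (l.snoc m hm).1 (k + 1) = m :=
  Function.update_self _ _ _

theorem dropLast_prod_last_injective :
    Function.Injective fun l : PartK (k + 1) => (l.dropLast, l.1 k) := by
  intro l l' h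
  obtain ⟨hdropLast, hlast⟩ := Prod.ext_iff.mp h
  refine Subtype.ext (funext fun i => ?_)
  rcases lt_trichotomy i k with hi | rfl | hi
  · rw [← dropLast_apply_of_lt l hi, ← dropLast_apply_of_lt l' hi]
    exact congrArg (fun l : PartK k => l.1 i) hdropLast
  · exact hlast
  · rw [l.2.2 i hi, l'.2.2 i hi]

theorem apply_zero_bijective : Function.Bijective fun l : PartK 1 => l.1 0 := by
  refine ⟨fun l l' h => Subtype.ext (funext fun i => ?_), fun n => ?_⟩
  · cases i with
    | zero => exact h
    | succ i => rw [l.2.2 _ (by lia), l'.2.2 _ (by lia)]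
  · exact ⟨⟨fun i => if i = 0 then n else 0, antitone_nat_of_succ_le fun i => by simp,
      fun i hi => if_neg (by lia)⟩, rfl⟩

theorem summable_prod {g : ℕ → ℝ} (hg0 : 0 ≤ g) (hg : Summable g) (k : ℕ) :
    Summable fun l : PartK k => ∏ i ∈ range k, g (l.1 i) := by
  induction k with
  | zero =>
    have : Subsingleton (PartK 0) := ⟨fun l l' => Subtype.ext <| funext fun i =>
      (l.2.2 i i.zero_le).trans (l'.2.2 i i.zero_le).symm⟩
    exact summable_of_hasFiniteSupport (Set.toFinite _)
  | succ k ih =>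
    have hprod := ih.mul_of_nonneg hg (fun l => prod_nonneg fun i _ => hg0 (l.1 i)) hg0
    refine (hprod.comp_injective dropLast_prod_last_injective).congr fun l => ?_
    rw [prod_range_succ]
    refine congrArg (· * g (l.1 k)) (prod_congr rfl fun i hi => ?_)
    rw [dropLast_apply_of_lt l (mem_range.mp hi)]

/-- The summand `∏_{i ≤ k} w(λ_i) c(λ_i - λ_{i+1}) · w(λ_{k+1}) β(λ_{k+1})` of the multisum
unfolding the `k`-fold iterate of `baileyStep w c` at `β`. -/
def chainTerm {R : Type*} [CommSemiring R] (w c β : ℕ → R) (l : PartK (k + 1)) : R :=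
  (∏ i ∈ range k, w (l.1 i) * c (l.1 i - l.1 (i + 1))) * (w (l.1 k) * β (l.1 k))

theorem summable_chainTerm {R : Type*} [NormedField R] [CompleteSpace R] {w c β : ℕ → R} {C : ℝ}
    (hw : Summable fun n => ‖w n‖) (hc : ∀ n, ‖c n‖ ≤ C) (hβ : ∀ n, ‖β n‖ ≤ C) (k : ℕ) :
    Summable (chainTerm w c β : PartK (k + 1) → R) := by
  have hC : 0 ≤ C := (norm_nonneg _).trans (hc 0)
  refine .of_norm_bounded
    (summable_prod (fun n => mul_nonneg (norm_nonneg (w n)) hC) (hw.mul_right C) (k + 1))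
    fun l => ?_
  rw [chainTerm, prod_range_succ, norm_mul, norm_prod, norm_mul]
  gcongr with i
  · rw [norm_mul]
    gcongr
    exact hc _
  · exact hβ _

section hasSum

variable {R : Type*} [CommSemiring R] [TopologicalSpace R] [IsTopologicalSemiring R]
  [RegularSpace R] {w c β : ℕ → R} {s : R}

theorem hasSum_chainTerm_baileyStep
    (h : HasSum (chainTerm w c β : PartK (k + 2) → R) s) :
    HasSum (chainTerm w c (baileyStep w c β) : PartK (k + 1) → R) s := by
  let extended (p : PartK (k + 1) × ℕ) : R :=
    p.1.chainTerm w c fun n => if p.2 ≤ n then w p.2 * β p.2 * c (n - p.2) else 0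
  have extended_eq : (extended ∘ fun l => (l.dropLast, l.1 (k + 1))) = chainTerm w c β := by
    funext l
    have hdropLast (i : ℕ) (hi : i < k + 1) := dropLast_apply_of_lt l hi
    have hprod : ∏ i ∈ range k, w (l.dropLast.1 i) * c (l.dropLast.1 i - l.dropLast.1 (i + 1)) =
        ∏ i ∈ range k, w (l.1 i) * c (l.1 i - l.1 (i + 1)) :=
      prod_congr rfl fun i hi => by
        have := mem_range.mp hi
        rw [hdropLast i (by lia), hdropLast (i + 1) (by lia)]
    simp only [extended, Function.comp_apply, chainTerm]
    rw [hprod, prod_range_succ, hdropLast k k.lt_succ_self, if_pos (l.2.1 k.le_succ)]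
    ring
  have extended_eq_zero (p : PartK (k + 1) × ℕ)
      (hp : p ∉ Set.range fun l : PartK (k + 2) => (l.dropLast, l.1 (k + 1))) : extended p = 0 := by
    have hlt : ¬ p.2 ≤ p.1.1 k := fun hle =>
      hp ⟨p.1.snoc p.2 hle, Prod.ext (dropLast_snoc p.1 hle) (snoc_apply_last p.1 hle)⟩
    simp only [extended, chainTerm, if_neg hlt, mul_zero]
  rw [← extended_eq, dropLast_prod_last_injective.hasSum_iff extended_eq_zero] at h
  refine h.prod_fiberwise fun l => HasSum.mul_left _ (HasSum.mul_left _ ?_)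
  rw [baileyStep, sum_congr rfl fun m hm => (if_pos (Nat.lt_succ_iff.mp (mem_range.mp hm))).symm]
  exact hasSum_sum_of_ne_finset_zero fun m hm =>
    if_neg fun hle => hm (mem_range.mpr (Nat.lt_succ_iff.mpr hle))

theorem hasSum_mul_iterate_baileyStep (h : HasSum (chainTerm w c β : PartK (k + 1) → R) s) :
    HasSum (fun n => w n * (baileyStep w c)^[k] β n) s := by
  induction k generalizing β with
  | zero =>
    rw [← (Equiv.ofBijective _ apply_zero_bijective).hasSum_iff]
    exact h.congr_fun fun l => by simp [chainTerm]
  | succ k ih => exact ih (hasSum_chainTerm_baileyStep h)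

end hasSum

end PartK

theorem IsBaileyPair.tsum_chainTerm {a q : ℂ} {α β : ℕ → ℂ} (h : IsBaileyPair a q α β)
    (hq : ‖q‖ < 1) (ha : ‖a * q‖ < 1) {C : ℝ} (hβ : ∀ n, ‖β n‖ ≤ C) {k : ℕ}
    (hα : Summable fun r => (a ^ r * q ^ r ^ 2) ^ (k + 1) * α r) :
    ∑' l : PartK (k + 1), l.chainTerm (fun n => a ^ n * q ^ n ^ 2) (fun n => (qPoch q q n)⁻¹) β =
      (∑' r, (a ^ r * q ^ r ^ 2) ^ (k + 1) * α r) / qPochInf (a * q) q := by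
  obtain ⟨D, hD⟩ := exists_norm_inv_qPoch_le hq hq
  have multisum := PartK.summable_chainTerm (summable_pow_mul_pow_sq a hq).norm
    (fun n => (hD n).trans (le_max_left D C)) (fun n => (hβ n).trans (le_max_right D C)) k
  have unfolded := PartK.hasSum_mul_iterate_baileyStep multisum.hasSum
  have pair := h.iterate_step (qPoch_ne_zero hq hq) (qPoch_ne_zero ha hq) k
  simp only [pow_succ' (_ * _), mul_assoc (_ * _)] at hα ⊢
  rw [← unfolded.tsum_eq, pair.tsum_eq hq ha hα unfolded.summable]

theorem div_eq_chainTerm (q : ℂ) {k : ℕ} (l : PartK (k + 1)) :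
    q ^ (wtK (k + 1) l + n2K (k + 1) l) / (qPoch (-q) q (l.1 k) * pochK q q (k + 1) l) =
      l.chainTerm (fun n => q ^ n * q ^ n ^ 2) (fun n => (qPoch q q n)⁻¹)
        (fun n => 1 / (qPoch q q n * qPoch (-q) q n)) := by
  rw [PartK.chainTerm, wtK, n2K, pochK, ← sum_add_distrib, ← prod_pow_eq_pow_sum,
    prod_range_succ, prod_range_succ, l.2.2 (k + 1) le_rfl, prod_mul_distrib, prod_inv_distrib]
  simp only [pow_add, Nat.sub_zero]
  field_simp

theorem jacobiTerm_pow_natCast (q : ℂ) (k r : ℕ) :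
    jacobiTerm (q ^ (2 * k + 1)) q r = (q ^ r * q ^ r ^ 2) ^ k * ((-1) ^ r * q ^ r ^ 2) := by
  have exponent : (2 * k + 1) * (r + 1).choose 2 + r.choose 2 = (r + r ^ 2) * k + r ^ 2 := by
    have h := choose_two_succ_add_choose_two r
    rw [choose_two_succ] at h ⊢
    linear_combination (k + 1) * h
  rw [jacobiTerm_natCast, ← pow_mul, mul_assoc, ← pow_add, exponent]
  ring

theorem hasSum_pow_mul_one_sub_pow {q : ℂ} (hq : ‖q‖ < 1) (k : ℕ) :
    HasSum (fun r => (q ^ r * q ^ r ^ 2) ^ k *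
        ((-1) ^ r * q ^ r ^ 2 * (1 - q ^ (2 * r + 1)) / (1 - q)))
      (qPochInf (q ^ (2 * k + 2)) (q ^ (2 * k + 2)) *
        qPochInf (q ^ (2 * k + 1)) (q ^ (2 * k + 2)) * qPochInf q (q ^ (2 * k + 2)) / (1 - q)) := by
  have base_eq : q ^ (2 * k + 1) * q = q ^ (2 * k + 2) := (pow_succ q (2 * k + 1)).symm
  have base_lt : ‖q ^ (2 * k + 1) * q‖ < 1 := by
    rw [base_eq, norm_pow]
    exact pow_lt_one₀ (norm_nonneg q) hq (by lia)
  have triple := (hasSum_jacobiTerm_natCast_mul base_lt).div_const (1 - q)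
  rw [base_eq] at triple
  exact triple.congr_fun fun r => by rw [jacobiTerm_pow_natCast]; ring

/-- Identity (15): for `k ≥ 1`, `|q| < 1`,
`Σ_{l(λ)≤k} q^{|λ|+n_2(λ)} / ((-q;q)_{λ_k} (q;q)_λ)
  = (q^{2k+2},q^{2k+1},q;q^{2k+2})_∞ / (q;q)_∞`. -/
theorem andrews_gordon_type_15 (k : ℕ) (hk : 1 ≤ k) (q : ℂ) (hq : ‖q‖ < 1) :
    ∑' lam : PartK k,
        q ^ (wtK k lam + n2K k lam) /
          (qPoch (-q) q (lam.1 (k - 1)) * pochK q q k lam)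
      = qPochInf (q ^ (2 * k + 2)) (q ^ (2 * k + 2)) *
          qPochInf (q ^ (2 * k + 1)) (q ^ (2 * k + 2)) *
          qPochInf q (q ^ (2 * k + 2)) / qPochInf q q := by
  obtain ⟨k, rfl⟩ := Nat.exists_eq_add_of_le' hk
  have hneg : ‖-q‖ < 1 := by rwa [norm_neg]
  have hqq : ‖q * q‖ < 1 :=
    norm_mul q q ▸ mul_lt_one_of_nonneg_of_lt_one_left (norm_nonneg q) hq hq.le
  obtain ⟨C, hC⟩ := exists_norm_inv_qPoch_le hq hq
  obtain ⟨D, hD⟩ := exists_norm_inv_qPoch_le hneg hq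
  have pair := isBaileyPair_inv_qPoch_mul_qPoch_neg (qPoch_ne_zero hq hq) (qPoch_ne_zero hneg hq)
  have theta := hasSum_pow_mul_one_sub_pow hq (k + 1)
  have β_bound (n : ℕ) : ‖1 / (qPoch q q n * qPoch (-q) q n)‖ ≤ C * D := by
    rw [one_div, mul_inv]
    exact norm_mul_le_of_le (hC n) (hD n)
  rw [Nat.add_sub_cancel, tsum_congr (div_eq_chainTerm q),
    pair.tsum_chainTerm hq hqq β_bound theta.summable, theta.tsum_eq, div_div,
    ← qPochInf_eq_one_sub_mul q hq]
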